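/- (Best approximation property of the ReK method.) If the ReK directions p₀, p₁, …, p_{q−1} are all nonzero, then for every k = 1, 2, …, q the ReK iterate x_k minimizes φ over the shifted restricted Krylov subspace x₀ + K_C(r₀; k−1) ⊆ R(C). -/

import Mathlib

open Matrix

/-!
Let `𝒦 k` be the Krylov subspace with `k` generators. Each direction `p k` lies in `𝒦 (k + 1)` and
is conjugate to `𝒦 k`. Since `p k` is not conjugate to itself, it lies outside `𝒦 k`, so that
`𝒦 (k + 1) = 𝒦 k ⊔ span {p k}`. Given this splitting, the step length makes the residual
`r (k + 1)` orthogonal to `𝒦 (k + 1)`, and the choice of `β`, together with the symmetry of `P`,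
makes `p (k + 1)` conjugate to `𝒦 (k + 1)`. Orthogonality of the residual to `𝒦 k` is the
first-order optimality condition for the convex objective on `x 0 + 𝒦 k`.
-/

section Krylov

/-- The Krylov subspace spanned by the first `k` vectors of the orbit `v, A v, A² v, …`. The index
counts generators, so `K_C(r₀; k - 1)` of the paper is `krylovSubspace (Π_C S) (Π_C r₀) k`. -/
def krylovSubspace {R M : Type*} [Semiring R] [AddCommMonoid M] [Module R M]
    (A : Module.End R M) (v : M) (k : ℕ) : Submodule R M :=
  Submodule.span R (Set.range fun j : Fin k => (A ^ (j : ℕ)) v)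

namespace krylovSubspace

section Semiring

variable {R M : Type*} [Semiring R] [AddCommMonoid M] [Module R M] (A : Module.End R M) (v : M)

lemma zero_eq_bot : krylovSubspace A v 0 = ⊥ := by
  simp [krylovSubspace]

variable {A v}

lemma le_iff {k : ℕ} {W : Submodule R M} :
    krylovSubspace A v k ≤ W ↔ ∀ j < k, (A ^ j) v ∈ W := by
  simp [krylovSubspace, Submodule.span_le, Set.range_subset_iff, Fin.forall_iff]

variable (A v)

lemma pow_apply_mem {j k : ℕ} (hjk : j < k) : (A ^ j) v ∈ krylovSubspace A v k :=
  le_iff.1 le_rfl j hjk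

lemma mono : Monotone (krylovSubspace A v) := fun _ _ hkl =>
  le_iff.2 fun _ hj => pow_apply_mem A v (hj.trans_le hkl)

lemma succ_eq_span_insert (k : ℕ) :
    krylovSubspace A v (k + 1) =
      Submodule.span R (insert ((A ^ k) v) (krylovSubspace A v k : Set M)) := by
  refine le_antisymm (le_iff.2 fun j hj => Submodule.subset_span ?_) (Submodule.span_le.2 ?_)
  · rcases Nat.lt_succ_iff_lt_or_eq.1 hj with hjk | rfl
    · exact Set.mem_insert_of_mem _ (pow_apply_mem A v hjk)
    · exact Set.mem_insert _ _
  · exact Set.insert_subset (pow_apply_mem A v k.lt_succ_self) (mono A v k.le_succ)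

variable {A v}

lemma apply_mem_succ {k : ℕ} {w : M} (hw : w ∈ krylovSubspace A v k) :
    A w ∈ krylovSubspace A v (k + 1) := by
  have hle : krylovSubspace A v k ≤ (krylovSubspace A v (k + 1)).comap A := le_iff.2 fun j hj => by
    rw [Submodule.mem_comap, ← Module.End.mul_apply, ← pow_succ']
    exact pow_apply_mem A v (Nat.succ_lt_succ hj)
  exact hle hw

lemma le_of_mem_of_range_le {W : Submodule R M} (hv : v ∈ W) (hA : LinearMap.range A ≤ W)
    (k : ℕ) : krylovSubspace A v k ≤ W := by
  refine le_iff.2 fun j _ => ?_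
  cases j with
  | zero => simpa using hv
  | succ j =>
    rw [pow_succ', Module.End.mul_apply]
    exact hA (LinearMap.mem_range_self A _)

end Semiring

lemma succ_eq_sup_span_singleton {K V : Type*} [DivisionRing K] [AddCommGroup V] [Module K V]
    {A : Module.End K V} {v y : V} {k : ℕ}
    (hy : y ∈ krylovSubspace A v (k + 1)) (hy' : y ∉ krylovSubspace A v k) :
    krylovSubspace A v (k + 1) = krylovSubspace A v k ⊔ Submodule.span K {y} := by
  have hspan : krylovSubspace A v k ⊔ Submodule.span K {y} =
      Submodule.span K (insert y (krylovSubspace A v k : Set V)) := by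
    rw [Submodule.span_insert, Submodule.span_eq, sup_comm]
  refine le_antisymm ?_ <|
    sup_le (mono A v k.le_succ) ((Submodule.span_singleton_le_iff_mem _ _).2 hy)
  rw [hspan, succ_eq_span_insert, Submodule.span_le]
  refine Set.insert_subset ?_ ((Set.subset_insert _ _).trans Submodule.subset_span)
  exact mem_span_insert_exchange (succ_eq_span_insert A v k ▸ hy)
    (by rwa [Submodule.span_eq])

lemma mulVecLin_eq_span {R ι : Type*} [CommSemiring R] [Fintype ι] [DecidableEq ι]
    (A : Matrix ι ι R) (v : ι → R) (k : ℕ) :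
    krylovSubspace A.mulVecLin v k =
      Submodule.span R (Set.range fun j : Fin k => (A ^ (j : ℕ)) *ᵥ v) := by
  simp only [krylovSubspace, ← Matrix.toLin'_apply', ← Matrix.toLin'_pow, Matrix.toLin'_apply]

end krylovSubspace

end Krylov

section QuadraticObjective

variable {K V : Type*} [Field K] [AddCommGroup V] [Module K V]

/-- The objective `φ(x) = ½⟨x, S x⟩ - ⟨b, x⟩`, where the pairing is a bilinear form `B`. -/
def quadraticObjective (B : LinearMap.BilinForm K V) (S : Module.End K V) (b x : V) : K :=
  1 / 2 * B x (S x) - B b x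

variable {B : LinearMap.BilinForm K V} {S : Module.End K V}

lemma quadraticObjective_add [NeZero (2 : K)] (hB : B.IsSymm) (hS : B.IsSelfAdjoint S)
    (b x d : V) :
    quadraticObjective B S b (x + d) =
      quadraticObjective B S b x - B (b - S x) d + 1 / 2 * B d (S d) := by
  have hcross : B d (S x) = B x (S d) := by rw [hB.eq, hS]
  simp only [quadraticObjective, map_add, map_sub, LinearMap.add_apply, LinearMap.sub_apply,
    hcross, hS x d]
  field

lemma isMinOn_quadraticObjective [LinearOrder K] [IsStrictOrderedRing K]
    (hB : B.IsSymm) (hS : B.IsSelfAdjoint S) (hS_nonneg : ∀ v, 0 ≤ B v (S v))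
    {W : Submodule K V} {b x₀ x : V} (hx : x - x₀ ∈ W) (hres : W ≤ LinearMap.ker (B (b - S x))) :
    IsMinOn (quadraticObjective B S b) {z | z - x₀ ∈ W} x := by
  intro z hz
  have hd : z - x ∈ W := by simpa using W.sub_mem hz hx
  have hexpand := quadraticObjective_add hB hS b x (z - x)
  rw [add_sub_cancel, LinearMap.mem_ker.1 (hres hd), sub_zero] at hexpand
  have hquad : 0 ≤ 1 / 2 * B (z - x) (S (z - x)) := mul_nonneg (by norm_num) (hS_nonneg _)
  exact (le_add_of_nonneg_right hquad).trans_eq hexpand.symm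

end QuadraticObjective

/-- The recurrences of the restricted Krylov method for `S x = b` with iterates `x`, directions `p`
and residuals `r`. The inner product is replaced by a bilinear form `B` and the projection `Π_C` by
an arbitrary operator `P`. A step with `B (p k) (S (p k)) = 0` divides by zero, so that its
coefficients are `0`. -/
structure IsReKRun {K V : Type*} [Field K] [AddCommGroup V] [Module K V]
    (B : LinearMap.BilinForm K V) (S P : Module.End K V) (b : V) (x p r : ℕ → V) : Prop where
  residual : ∀ k, r k = b - S (x k)
  direction_zero : p 0 = P (r 0)
  direction_succ : ∀ k, p (k + 1) =
    P (r (k + 1)) + (-B (r (k + 1)) (P (S (p k))) / B (p k) (S (p k))) • p k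
  iterate_succ : ∀ k, x (k + 1) = x k + (B (r k) (p k) / B (p k) (S (p k))) • p k

namespace IsReKRun

variable {K V : Type*} [Field K] [AddCommGroup V] [Module K V]
  {B : LinearMap.BilinForm K V} {S P : Module.End K V} {b : V} {x p r : ℕ → V}

lemma residual_succ (h : IsReKRun B S P b x p r) (k : ℕ) :
    r (k + 1) = r k - (B (r k) (p k) / B (p k) (S (p k))) • S (p k) := by
  rw [h.residual (k + 1), h.iterate_succ, map_add, map_smul, ← sub_sub, ← h.residual]

lemma apply_residual_mem_and_direction_mem (h : IsReKRun B S P b x p r) (k : ℕ) :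
    P (r k) ∈ krylovSubspace (P * S) (P (r 0)) (k + 1) ∧
      p k ∈ krylovSubspace (P * S) (P (r 0)) (k + 1) := by
  induction k with
  | zero =>
    have hmem := krylovSubspace.pow_apply_mem (P * S) (P (r 0)) zero_lt_one
    exact ⟨hmem, h.direction_zero ▸ hmem⟩
  | succ k ih =>
    have hmono := krylovSubspace.mono (P * S) (P (r 0)) (k + 1).le_succ
    have hres : P (r (k + 1)) ∈ krylovSubspace (P * S) (P (r 0)) (k + 1 + 1) := by
      rw [h.residual_succ, map_sub, map_smul]
      exact Submodule.sub_mem _ (hmono ih.1)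
        (Submodule.smul_mem _ _ (krylovSubspace.apply_mem_succ ih.2))
    refine ⟨hres, ?_⟩
    rw [h.direction_succ]
    exact Submodule.add_mem _ hres (Submodule.smul_mem _ _ (hmono ih.2))

lemma direction_mem (h : IsReKRun B S P b x p r) (k : ℕ) :
    p k ∈ krylovSubspace (P * S) (P (r 0)) (k + 1) :=
  (h.apply_residual_mem_and_direction_mem k).2

lemma iterate_sub_mem (h : IsReKRun B S P b x p r) (k : ℕ) :
    x k - x 0 ∈ krylovSubspace (P * S) (P (r 0)) k := by
  induction k with
  | zero => simp
  | succ k ih =>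
    rw [h.iterate_succ, add_sub_right_comm]
    exact Submodule.add_mem _ (krylovSubspace.mono _ _ k.le_succ ih)
      (Submodule.smul_mem _ _ (h.direction_mem k))

lemma krylovSubspace_succ_eq (h : IsReKRun B S P b x p r) {k : ℕ}
    (hpk : B (p k) (S (p k)) ≠ 0)
    (hconj : krylovSubspace (P * S) (P (r 0)) k ≤ LinearMap.ker (B (p k) ∘ₗ S)) :
    krylovSubspace (P * S) (P (r 0)) (k + 1) =
      krylovSubspace (P * S) (P (r 0)) k ⊔ Submodule.span K {p k} :=
  krylovSubspace.succ_eq_sup_span_singleton (h.direction_mem k) fun hmem => hpk (hconj hmem)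

lemma residual_orthogonal_succ (h : IsReKRun B S P b x p r) (hS : B.IsSelfAdjoint S) {k : ℕ}
    (hpk : B (p k) (S (p k)) ≠ 0)
    (horth : krylovSubspace (P * S) (P (r 0)) k ≤ LinearMap.ker (B (r k)))
    (hconj : krylovSubspace (P * S) (P (r 0)) k ≤ LinearMap.ker (B (p k) ∘ₗ S)) :
    krylovSubspace (P * S) (P (r 0)) (k + 1) ≤ LinearMap.ker (B (r (k + 1))) := by
  have hexpand (w : V) : B (r (k + 1)) w =
      B (r k) w - B (r k) (p k) / B (p k) (S (p k)) * B (p k) (S w) := by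
    rw [h.residual_succ, map_sub, map_smul, LinearMap.sub_apply, LinearMap.smul_apply, smul_eq_mul,
      hS]
  rw [h.krylovSubspace_succ_eq hpk hconj, sup_le_iff, Submodule.span_singleton_le_iff_mem]
  refine ⟨fun w hw => ?_, ?_⟩
  · have horth_w : B (r k) w = 0 := horth hw
    have hconj_w : B (p k) (S w) = 0 := hconj hw
    rw [LinearMap.mem_ker, hexpand, horth_w, hconj_w, mul_zero, sub_zero]
  · rw [LinearMap.mem_ker, hexpand, div_mul_cancel₀ _ hpk, sub_self]

lemma direction_conjugate_succ (h : IsReKRun B S P b x p r) (hP : B.IsSelfAdjoint P) {k : ℕ}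
    (hpk : B (p k) (S (p k)) ≠ 0)
    (hconj : krylovSubspace (P * S) (P (r 0)) k ≤ LinearMap.ker (B (p k) ∘ₗ S))
    (horth_succ : krylovSubspace (P * S) (P (r 0)) (k + 1) ≤ LinearMap.ker (B (r (k + 1)))) :
    krylovSubspace (P * S) (P (r 0)) (k + 1) ≤ LinearMap.ker (B (p (k + 1)) ∘ₗ S) := by
  have hexpand (w : V) : B (p (k + 1)) (S w) = B (r (k + 1)) (P (S w)) +
      -B (r (k + 1)) (P (S (p k))) / B (p k) (S (p k)) * B (p k) (S w) := by
    rw [h.direction_succ, map_add, map_smul, LinearMap.add_apply, LinearMap.smul_apply, smul_eq_mul,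
      hP]
  rw [h.krylovSubspace_succ_eq hpk hconj, sup_le_iff, Submodule.span_singleton_le_iff_mem]
  refine ⟨fun w hw => ?_, ?_⟩
  · have horth_w : B (r (k + 1)) (P (S w)) = 0 := horth_succ (krylovSubspace.apply_mem_succ hw)
    have hconj_w : B (p k) (S w) = 0 := hconj hw
    rw [LinearMap.mem_ker, LinearMap.comp_apply, hexpand, horth_w, hconj_w, mul_zero, add_zero]
  · rw [LinearMap.mem_ker, LinearMap.comp_apply, hexpand, div_mul_cancel₀ _ hpk, add_neg_cancel]

lemma residual_orthogonal_and_direction_conjugate (h : IsReKRun B S P b x p r)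
    (hS : B.IsSelfAdjoint S) (hP : B.IsSelfAdjoint P) {k : ℕ}
    (hp : ∀ j < k, B (p j) (S (p j)) ≠ 0) :
    krylovSubspace (P * S) (P (r 0)) k ≤ LinearMap.ker (B (r k)) ∧
      krylovSubspace (P * S) (P (r 0)) k ≤ LinearMap.ker (B (p k) ∘ₗ S) := by
  induction k with
  | zero => simp only [krylovSubspace.zero_eq_bot, bot_le, and_self]
  | succ k ih =>
    obtain ⟨horth, hconj⟩ := ih fun j hj => hp j (hj.trans k.lt_succ_self)
    have hpk := hp k k.lt_succ_self
    have horth_succ := h.residual_orthogonal_succ hS hpk horth hconj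
    exact ⟨horth_succ, h.direction_conjugate_succ hP hpk hconj horth_succ⟩

end IsReKRun

section DotProduct

variable {R ι : Type*} [CommSemiring R] [Fintype ι]

lemma isSymm_dotProductBilin :
    LinearMap.BilinForm.IsSymm (dotProductBilin R R : LinearMap.BilinForm R (ι → R)) :=
  ⟨dotProduct_comm⟩

lemma isSelfAdjoint_dotProductBilin_mulVecLin {A : Matrix ι ι R} (hA : A.IsSymm) :
    (dotProductBilin R R : LinearMap.BilinForm R (ι → R)).IsSelfAdjoint A.mulVecLin := by
  intro u v
  simp only [dotProductBilin_apply_apply, Matrix.mulVecLin_apply]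
  rw [Matrix.dotProduct_mulVec, ← Matrix.mulVec_transpose, hA.eq]

end DotProduct

theorem rek_best_approximation_general {K V : Type*} [Field K] [LinearOrder K]
    [IsStrictOrderedRing K] [AddCommGroup V] [Module K V]
    {B : LinearMap.BilinForm K V} (hB : B.IsSymm) {S P : Module.End K V}
    (hS : B.IsSelfAdjoint S) (hS_nonneg : ∀ v, 0 ≤ B v (S v)) (hP : B.IsSelfAdjoint P)
    {b : V} {x p r : ℕ → V} (h : IsReKRun B S P b x p r) (hx0 : x 0 ∈ LinearMap.range P)
    {k : ℕ} (hp : ∀ j < k, B (p j) (S (p j)) ≠ 0) :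
    x k - x 0 ∈ krylovSubspace (P * S) (P (r 0)) k ∧
      (∀ z, z - x 0 ∈ krylovSubspace (P * S) (P (r 0)) k → z ∈ LinearMap.range P) ∧
      IsMinOn (quadraticObjective B S b)
        {z | z - x 0 ∈ krylovSubspace (P * S) (P (r 0)) k} (x k) := by
  refine ⟨h.iterate_sub_mem k, fun z hz => ?_, ?_⟩
  · have hle : krylovSubspace (P * S) (P (r 0)) k ≤ LinearMap.range P :=
      krylovSubspace.le_of_mem_of_range_le (LinearMap.mem_range_self P _)
        (LinearMap.range_comp_le_range S P) k
    exact (Submodule.sub_mem_iff_left _ hx0).1 (hle hz)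
  · have horth := (h.residual_orthogonal_and_direction_conjugate hS hP hp).1
    rw [h.residual k] at horth
    exact isMinOn_quadraticObjective hB hS hS_nonneg (h.iterate_sub_mem k) horth

/-- Best approximation property of the ReK method: if the ReK directions
`p₀, …, p_{q−1}` are all nonzero, then for every `k = 1, …, q` the iterate `x_k`
minimizes `φ(x) = (1/2) xᵀSx − bᵀx` over the shifted restricted Krylov subspace
`x₀ + K_C(r₀; k−1)`, which is contained in `R(C)`. -/
theorem rek_best_approximation
    (n m : ℕ) (hn : 0 < n) (hm : 0 < m)
    (S : Matrix (Fin n) (Fin n) ℝ) (hS : S.PosDef)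
    (C : Matrix (Fin n) (Fin m) ℝ) (b : Fin n → ℝ)
    (q : ℕ) (hq : q = C.rank)
    (Pr : Matrix (Fin n) (Fin n) ℝ)
    (hPrSym : Prᵀ = Pr) (hPrIdem : Pr * Pr = Pr)
    (hPrRange : LinearMap.range Pr.mulVecLin = LinearMap.range C.mulVecLin)
    (x p r : ℕ → (Fin n → ℝ))
    (hr : ∀ k, r k = b - S.mulVec (x k))
    (hx0 : x 0 ∈ LinearMap.range C.mulVecLin)
    (hp0 : p 0 = Pr.mulVec (r 0))
    (hprec : ∀ k : ℕ, p (k + 1) = Pr.mulVec (r (k + 1)) +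
        (-(r (k + 1) ⬝ᵥ Pr.mulVec (S.mulVec (p k))) / (p k ⬝ᵥ S.mulVec (p k))) • p k)
    (hxrec : ∀ k : ℕ, x (k + 1) = x k +
        ((r k ⬝ᵥ p k) / (p k ⬝ᵥ S.mulVec (p k))) • p k)
    (hpnz : ∀ k, k < q → p k ≠ 0) :
    ∀ k : ℕ, 1 ≤ k → k ≤ q →
      (x k - x 0 ∈ Submodule.span ℝ (Set.range fun j : Fin k =>
          ((Pr * S) ^ (j : ℕ)).mulVec (Pr.mulVec (r 0)))) ∧
      (∀ z : Fin n → ℝ,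
        z - x 0 ∈ Submodule.span ℝ (Set.range fun j : Fin k =>
            ((Pr * S) ^ (j : ℕ)).mulVec (Pr.mulVec (r 0))) →
          z ∈ LinearMap.range C.mulVecLin) ∧
      (∀ z : Fin n → ℝ,
        z - x 0 ∈ Submodule.span ℝ (Set.range fun j : Fin k =>
            ((Pr * S) ^ (j : ℕ)).mulVec (Pr.mulVec (r 0))) →
          (1 / 2 : ℝ) * (x k ⬝ᵥ S.mulVec (x k)) - b ⬝ᵥ x k ≤
            (1 / 2 : ℝ) * (z ⬝ᵥ S.mulVec z) - b ⬝ᵥ z) := by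
  intro k _ hk
  have hrun : IsReKRun (dotProductBilin ℝ ℝ) S.mulVecLin Pr.mulVecLin b x p r :=
    ⟨hr, hp0, hprec, hxrec⟩
  have hS_nonneg (v : Fin n → ℝ) : 0 ≤ v ⬝ᵥ S *ᵥ v := by
    simpa using hS.posSemidef.dotProduct_mulVec_nonneg v
  have hpSp : ∀ j < k, p j ⬝ᵥ S *ᵥ p j ≠ 0 := fun j hj => by
    simpa using (hS.dotProduct_mulVec_pos (hpnz j (hj.trans_le hk))).ne'
  have hS_symm : S.IsSymm := by simpa using hS.isHermitian
  rw [← hPrRange] at hx0 ⊢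
  simp only [← krylovSubspace.mulVecLin_eq_span, Matrix.mulVecLin_mul]
  exact rek_best_approximation_general isSymm_dotProductBilin
    (isSelfAdjoint_dotProductBilin_mulVecLin hS_symm) hS_nonneg
    (isSelfAdjoint_dotProductBilin_mulVecLin hPrSym) hrun hx0 hpSp
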